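/- Fractional Sobolev-in-time bound for u^l (Lemma 3.10): for every α ∈ (0, 1/2) and all T > 0, L ≥ 0, g₀ ≥ 0, A > 0, B ≥ 0, D ≥ 0 there exists a constant C ≥ 0, depending only on α, T, L, g₀, A, B, D, such that for every N ≥ 1, every discrete setting (V, m, τ) with Σ_{K∈V} m K ≤ A, every g Lipschitz with constant L and |g(0)| ≤ g₀, and every initial datum with E[‖u⁰‖_m²] ≤ B and E[|u⁰|₁²] ≤ D: E[∫₀^T ∫₀^T ‖u^l(s) − u^l(t)‖_m² / |t − s|^{1+2α} ds dt] ≤ C. -/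

import Mathlib

open MeasureTheory ProbabilityTheory

/-- Discrete `L²` norm squared: `‖w‖_m² = Σ_K m K · (w K)²`. -/
noncomputable def normSq {V : Type} [Fintype V] (m : V → ℝ) (w : V → ℝ) : ℝ :=
  ∑ K, m K * w K ^ 2

/-- Discrete `H¹` seminorm squared: `|w|₁² = (1/2) Σ_K Σ_L τ K L · (w K − w L)²`. -/
noncomputable def seminormSq {V : Type} [Fintype V] (τ : V → V → ℝ) (w : V → ℝ) : ℝ :=
  (1 / 2) * ∑ K, ∑ L, τ K L * (w K - w L) ^ 2

/-- The semi-implicit finite-volume scheme for the stochastic heat equation in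
abstract graph form, driven by a continuous-time Brownian motion `W` with respect
to a filtration `F` indexed by `[0, T]`: cell measures `m`, symmetric nonnegative
transmissibilities `τ`, `N ≥ 1` time steps of size `Δt = T/N`, `W 0 = 0` a.s.,
`W t` is `F t`-measurable, increments `W t − W s` independent of `F s` and Gaussian
with mean `0` and variance `t − s`, a Lipschitz nonlinearity `g` (constant `L`),
a square-integrable `F 0`-measurable initial datum `u 0`, each `u n` is
`F t_n`-measurable, and the scheme equations with `ΔW_{n+1} = W t_{n+1} − W t_n`. -/
structure BScheme (V : Type) [Fintype V] [Nonempty V]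
    (Ω : Type) [mΩ : MeasurableSpace Ω]
    (T L : ℝ) (g : ℝ → ℝ) (N : ℕ) where
  P : Measure Ω
  probP : IsProbabilityMeasure P
  m : V → ℝ
  m_pos : ∀ K, 0 < m K
  τ : V → V → ℝ
  τ_symm : ∀ K L', τ K L' = τ L' K
  τ_nonneg : ∀ K L', 0 ≤ τ K L'
  τ_diag : ∀ K, τ K K = 0
  T_pos : 0 < T
  N_pos : 1 ≤ N
  L_nonneg : 0 ≤ L
  g_lip : ∀ r s : ℝ, |g r - g s| ≤ L * |r - s|
  F : ℝ → MeasurableSpace Ω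
  F_le : ∀ t, F t ≤ mΩ
  F_mono : Monotone F
  W : ℝ → Ω → ℝ
  W_zero : ∀ᵐ ω ∂P, W 0 ω = 0
  W_meas : ∀ t, 0 ≤ t → t ≤ T → Measurable[F t] (W t)
  W_indep : ∀ s t, 0 ≤ s → s ≤ t → t ≤ T →
    Indep (MeasurableSpace.comap (fun ω => W t ω - W s ω) Real.measurableSpace)
      (F s) P
  W_law : ∀ s t, 0 ≤ s → s ≤ t → t ≤ T →
    P.map (fun ω => W t ω - W s ω) = gaussianReal 0 (Real.toNNReal (t - s))
  u : ℕ → Ω → V → ℝ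
  u_meas : ∀ n, n ≤ N → Measurable[F ((n : ℝ) * (T / N))] (u n)
  u0_int : Integrable (fun ω => normSq m (u 0 ω)) P
  scheme : ∀ n, n < N → ∀ᵐ ω ∂P, ∀ K,
    m K / (T / N) * (u (n + 1) ω K - u n ω K)
      + ∑ L', τ K L' * (u (n + 1) ω K - u (n + 1) ω L')
      = m K / (T / N) * g (u n ω K)
          * (W (((n : ℝ) + 1) * (T / N)) ω - W ((n : ℝ) * (T / N)) ω)

/-- Index `n` of the time interval `[t_n, t_{n+1})` containing `t` (capped at
`N − 1`, matching the convention for the value at `t = T`). -/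
noncomputable def timeIdx (T : ℝ) (N : ℕ) (t : ℝ) : ℕ :=
  min (Nat.floor (t / (T / N))) (N - 1)

/-- Left piecewise-constant time interpolant `u^l`. -/
noncomputable def ul {Ω V : Type} (T : ℝ) (N : ℕ)
    (u : ℕ → Ω → V → ℝ) (t : ℝ) (ω : Ω) : V → ℝ :=
  u (timeIdx T N t) ω

/-- The (continuous-time) discrete stochastic integral
`M(t) K = Σ_{k<N} g(u^k K) · (W(min(t,t_{k+1})) − W(min(t,t_k)))`. -/
noncomputable def Mint {Ω V : Type} (T : ℝ) (N : ℕ) (g : ℝ → ℝ)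
    (u : ℕ → Ω → V → ℝ) (W : ℝ → Ω → ℝ) (t : ℝ) (ω : Ω) (K : V) : ℝ :=
  ∑ k ∈ Finset.range N, g (u k ω K) *
    (W (min t (((k : ℝ) + 1) * (T / N))) ω - W (min t ((k : ℝ) * (T / N))) ω)


noncomputable def bil {V : Type} [Fintype V] (τ : V → V → ℝ) (u v : V → ℝ) : ℝ :=
  (1 / 2) * ∑ K, ∑ L, τ K L * ((u K - u L) * (v K - v L))

theorem bil_self {V : Type} [Fintype V] (τ : V → V → ℝ) (u : V → ℝ) :
    bil τ u u = seminormSq τ u := by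
  unfold bil seminormSq
  simp only [pow_two]

theorem sum_lap {V : Type} [Fintype V] (τ : V → V → ℝ) (hs : ∀ K L, τ K L = τ L K)
    (u v : V → ℝ) : ∑ K, (∑ L, τ K L * (u K - u L)) * v K = bil τ u v := by
  have h1 : ∑ K, (∑ L, τ K L * (u K - u L)) * v K
      = ∑ K, ∑ L, τ K L * (u K - u L) * v K := by
    simp only [Finset.sum_mul]
  have h2 : ∑ K, ∑ L, τ K L * (u K - u L) * v K
      = ∑ K, ∑ L, - (τ K L * (u K - u L) * v L) := by
    rw [Finset.sum_comm]
    refine Finset.sum_congr rfl fun K _ => Finset.sum_congr rfl fun L _ => ?_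
    rw [hs L K]; ring
  have h3 : ∑ K, ∑ L, τ K L * ((u K - u L) * (v K - v L))
      = ∑ K, ∑ L, τ K L * (u K - u L) * v K + ∑ K, ∑ L, - (τ K L * (u K - u L) * v L) := by
    simp only [← Finset.sum_add_distrib]
    refine Finset.sum_congr rfl fun K _ => Finset.sum_congr rfl fun L _ => ?_
    ring
  unfold bil
  rw [h3, ← h2, h1]; ring

theorem seminormSq_nonneg' {V : Type} [Fintype V] (τ : V → V → ℝ) (h0 : ∀ K L, 0 ≤ τ K L)
    (u : V → ℝ) : 0 ≤ seminormSq τ u := by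
  unfold seminormSq
  exact mul_nonneg (by norm_num) (Finset.sum_nonneg fun K _ => Finset.sum_nonneg fun L _ =>
    mul_nonneg (h0 K L) (sq_nonneg _))

theorem normSq_nonneg' {V : Type} [Fintype V] (m : V → ℝ) (h0 : ∀ K, 0 < m K)
    (u : V → ℝ) : 0 ≤ normSq m u :=
  Finset.sum_nonneg fun K _ => mul_nonneg (h0 K).le (sq_nonneg _)

theorem contr_L2 {V : Type} [Fintype V] (m : V → ℝ) (hm : ∀ K, 0 < m K)
    (τ : V → V → ℝ) (hs : ∀ K L, τ K L = τ L K) (h0 : ∀ K L, 0 ≤ τ K L)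
    (δ : ℝ) (hδ : 0 < δ) (u v : V → ℝ)
    (h : ∀ K, m K * (u K - v K) + δ * ∑ L, τ K L * (u K - u L) = 0) :
    normSq m u ≤ normSq m v := by
  have h1 : ∑ K, m K * (u K - v K) * u K = - δ * seminormSq τ u := by
    rw [← bil_self, ← sum_lap τ hs, Finset.mul_sum]
    refine Finset.sum_congr rfl fun K _ => ?_
    linear_combination (u K) * h K
  have h2 := seminormSq_nonneg' τ h0 u
  have h3 : normSq m u ≤ normSq m v + 2 * ∑ K, m K * (u K - v K) * u K := by
    unfold normSq
    rw [Finset.mul_sum, ← Finset.sum_add_distrib]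
    refine Finset.sum_le_sum fun K _ => ?_
    nlinarith [mul_nonneg (hm K).le (sq_nonneg (u K - v K))]
  rw [h1] at h3
  nlinarith

theorem contr_H1 {V : Type} [Fintype V] (m : V → ℝ) (hm : ∀ K, 0 < m K)
    (τ : V → V → ℝ) (hs : ∀ K L, τ K L = τ L K) (h0 : ∀ K L, 0 ≤ τ K L)
    (δ : ℝ) (hδ : 0 < δ) (u v : V → ℝ)
    (h : ∀ K, m K * (u K - v K) + δ * ∑ L, τ K L * (u K - u L) = 0) :
    seminormSq τ u ≤ seminormSq τ v := by
  have h1 : bil τ u (fun K => u K - v K) ≤ 0 := by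
    rw [← sum_lap τ hs]
    refine Finset.sum_nonpos fun K _ => ?_
    have := h K
    have e : (∑ L, τ K L * (u K - u L)) = - (m K * (u K - v K)) / δ := by
      field_simp; linarith
    rw [e]
    have : - (m K * (u K - v K)) / δ * (u K - v K) = - (m K * (u K - v K)^2 / δ) := by ring
    rw [this]
    have := hm K
    have : 0 ≤ m K * (u K - v K)^2 / δ := by positivity
    linarith
  have h3 : seminormSq τ u ≤ seminormSq τ v + 2 * bil τ u (fun K => u K - v K) := by
    unfold seminormSq bil
    have : ∑ K, ∑ L, τ K L * (u K - u L) ^ 2 ≤ ∑ K, ∑ L, τ K L * (v K - v L) ^ 2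
        + 2 * ∑ K, ∑ L, τ K L * ((u K - u L) * (u K - v K - (u L - v L))) := by
      simp only [Finset.mul_sum, ← Finset.sum_add_distrib]
      refine Finset.sum_le_sum fun K _ => Finset.sum_le_sum fun L _ => ?_
      nlinarith [mul_nonneg (h0 K L) (sq_nonneg ((u K - u L) - (v K - v L)))]
    linarith
  linarith

theorem bil_lower {V : Type} [Fintype V] (τ : V → V → ℝ) (h0 : ∀ K L, 0 ≤ τ K L)
    (w a b : V → ℝ) :
    - bil τ w (fun K => a K - b K) ≤
      (1 / 2) * (seminormSq τ w + 2 * seminormSq τ a + 2 * seminormSq τ b) := by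
  unfold seminormSq bil
  have : - ∑ K, ∑ L, τ K L * ((w K - w L) * (a K - b K - (a L - b L)))
      ≤ (1 / 2) * (∑ K, ∑ L, τ K L * (w K - w L) ^ 2 + 2 * ∑ K, ∑ L, τ K L * (a K - a L) ^ 2
        + 2 * ∑ K, ∑ L, τ K L * (b K - b L) ^ 2) := by
    simp only [Finset.mul_sum, ← Finset.sum_add_distrib, ← Finset.sum_neg_distrib]
    refine Finset.sum_le_sum fun K _ => Finset.sum_le_sum fun L _ => ?_
    have h := h0 K L
    generalize τ K L = c at *
    generalize w K - w L = x
    have e : a K - b K - (a L - b L) = (a K - a L) - (b K - b L) := by ring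
    rw [e]
    generalize a K - a L = y
    generalize b K - b L = z
    nlinarith [mul_nonneg h (sq_nonneg (x + (y - z))), mul_nonneg h (sq_nonneg (y + z))]
  linarith

/-- pathwise increment estimate -/
theorem incr_path {V : Type} [Fintype V] (m : V → ℝ) (hm : ∀ K, 0 < m K)
    (τ : V → V → ℝ) (hs : ∀ K L, τ K L = τ L K) (h0 : ∀ K L, 0 ≤ τ K L)
    (δ : ℝ) (hδ : 0 < δ) (k : ℕ) (w : ℕ → V → ℝ) (a b M : V → ℝ)
    (h : ∀ K, m K * (a K - b K) + δ * ∑ l ∈ Finset.range k, ∑ L, τ K L * (w l K - w l L)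
      = m K * M K) :
    normSq m (fun K => a K - b K) ≤
      δ * ∑ l ∈ Finset.range k, (seminormSq τ (w l) + 2 * seminormSq τ a + 2 * seminormSq τ b)
      + normSq m M := by
  have h1 : normSq m (fun K => a K - b K) = ∑ K, m K * M K * (a K - b K)
      + δ * ∑ l ∈ Finset.range k, - bil τ (w l) (fun K => a K - b K) := by
    simp only [← sum_lap τ hs]
    rw [Finset.sum_neg_distrib, Finset.sum_comm, mul_neg, ← sub_eq_add_neg, Finset.mul_sum,
      ← Finset.sum_sub_distrib]
    unfold normSq
    refine Finset.sum_congr rfl fun K _ => ?_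
    rw [← Finset.sum_mul]
    linear_combination (a K - b K) * h K
  have h2 : ∑ K, m K * M K * (a K - b K) ≤
      (1 / 2) * normSq m M + (1 / 2) * normSq m (fun K => a K - b K) := by
    unfold normSq
    simp only [Finset.mul_sum, ← Finset.sum_add_distrib]
    refine Finset.sum_le_sum fun K _ => ?_
    nlinarith [mul_nonneg (hm K).le (sq_nonneg (M K - (a K - b K)))]
  have h3 : ∑ l ∈ Finset.range k, - bil τ (w l) (fun K => a K - b K) ≤
      ∑ l ∈ Finset.range k,
        (1 / 2) * (seminormSq τ (w l) + 2 * seminormSq τ a + 2 * seminormSq τ b) :=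
    Finset.sum_le_sum fun l _ => bil_lower τ h0 _ _ _
  rw [← Finset.mul_sum] at h3
  have h4 := mul_le_mul_of_nonneg_left h3 hδ.le
  linarith

theorem gronwall_disc (e : ℕ → ℝ) (N : ℕ) (T c b : ℝ) (hN : 1 ≤ N) (hT : 0 < T) (hc : 0 ≤ c)
    (hb : 0 ≤ b) (e0 : 0 ≤ e 0)
    (h : ∀ n, n < N → e (n+1) ≤ e n + (T / N) * (b + c * e n)) :
    ∀ n, n ≤ N → e n ≤ Real.exp (c * T) * (e 0 + T * b) := by
  have hNr : (0:ℝ) < N := by exact_mod_cast hN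
  have hδ : 0 < T / N := by positivity
  have key : ∀ n, n ≤ N → e n ≤ (1 + c * (T/N)) ^ n * (e 0 + n * (T/N) * b) := by
    intro n
    induction n with
    | zero => intro _; simp
    | succ n ih =>
      intro hn
      have h1 := ih (by omega)
      have h2 := h n (by omega)
      have h3 : (1:ℝ) ≤ (1 + c * (T/N)) ^ (n+1) := one_le_pow₀ (by nlinarith)
      have h4 : (1 + c * (T/N)) * e n ≤ (1 + c * (T/N)) * ((1 + c * (T/N)) ^ n * (e 0 + n * (T/N) * b)) :=
        mul_le_mul_of_nonneg_left h1 (by positivity)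
      have h5 : (T/N) * b ≤ (1 + c * (T/N)) ^ (n+1) * ((T/N) * b) :=
        le_mul_of_one_le_left (by positivity) h3
      push_cast
      calc e (n+1) ≤ (1 + c * (T/N)) * e n + (T/N) * b := by linarith
        _ ≤ _ := add_le_add h4 h5
        _ = _ := by ring
  intro n hn
  have hnN : (n:ℝ) ≤ N := by exact_mod_cast hn
  have hnT : n * (T/N) ≤ T := by
    calc n * (T/N) ≤ N * (T/N) := by gcongr
      _ = T := by field_simp
  refine (key n hn).trans ?_
  have h1 : (1 + c * (T/N)) ^ n ≤ Real.exp (c * T) := by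
    calc (1 + c * (T/N)) ^ n ≤ (Real.exp (c * (T/N))) ^ n := by
          gcongr; linarith [Real.add_one_le_exp (c * (T/N))]
      _ = Real.exp (c * (n * (T/N))) := by rw [← Real.exp_nat_mul]; ring_nf
      _ ≤ _ := by gcongr
  gcongr

theorem core_indep {Ω : Type} (G : MeasurableSpace Ω) [mΩ : MeasurableSpace Ω] (P : Measure Ω)
    [IsProbabilityMeasure P] (hG : G ≤ mΩ) (ξ : Ω → ℝ) (v : ℝ) (hv : 0 ≤ v)
    (hξm : Measurable ξ)
    (hind : Indep (MeasurableSpace.comap ξ Real.measurableSpace) G P)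
    (hlaw : P.map ξ = gaussianReal 0 (Real.toNNReal v))
    (x y : Ω → ℝ) (hx : Measurable[G] x) (hy : Measurable[G] y)
    (hx2 : MemLp x 2 P) (hy2 : MemLp y 2 P) :
    MemLp (fun ω => x ω + y ω * ξ ω) 2 P ∧
    ∫ ω, (x ω + y ω * ξ ω) ^ 2 ∂P = ∫ ω, x ω ^ 2 ∂P + v * ∫ ω, y ω ^ 2 ∂P := by
  have hind' : ∀ z : Ω → ℝ, Measurable[G] z → IndepFun ξ z P := by
    intro z hz
    rw [IndepFun_iff_Indep]
    exact indep_of_indep_of_le_right hind hz.comap_le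
  have hξ2 : MemLp ξ 2 P := by
    have h : MemLp id 2 (P.map ξ) := by
      rw [hlaw]; exact memLp_id_gaussianReal' 2 (by simp)
    exact (memLp_map_measure_iff (by fun_prop) hξm.aemeasurable).1 h
  have hE : ∫ ω, ξ ω ∂P = 0 := by
    have := integral_map (μ := P) hξm.aemeasurable (f := fun x : ℝ => x) (by fun_prop)
    rw [← this, hlaw, integral_id_gaussianReal]
  have hE2 : ∫ ω, ξ ω ^ 2 ∂P = v := by
    have := integral_map (μ := P) hξm.aemeasurable (f := fun x : ℝ => x ^ 2) (by fun_prop)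
    rw [← this, hlaw]
    have h1 := variance_fun_id_gaussianReal (μ := 0) (v := Real.toNNReal v)
    rw [variance_eq_integral (by fun_prop)] at h1
    simpa [integral_id_gaussianReal, hv] using h1
  have mx : Measurable x := hx.mono hG le_rfl
  have my : Measurable y := hy.mono hG le_rfl
  have hxy : Measurable[G] (fun ω => x ω * y ω) := hx.mul hy
  have hyy : Measurable[G] (fun ω => y ω ^ 2) := hy.pow_const 2
  have i1 : IndepFun ξ (fun ω => x ω * y ω) P := hind' _ hxy
  have i2 : IndepFun (fun ω => ξ ω ^ 2) (fun ω => y ω ^ 2) P :=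
    (hind' _ hyy).comp (φ := fun r : ℝ => r ^ 2) (ψ := id) (by fun_prop) measurable_id
  have I1 : Integrable (fun ω => ξ ω * (x ω * y ω)) P :=
    i1.integrable_mul (hξ2.integrable (by norm_num)) (hx2.integrable_mul hy2)
  have I2 : Integrable (fun ω => ξ ω ^ 2 * y ω ^ 2) P :=
    i2.integrable_mul hξ2.integrable_sq hy2.integrable_sq
  have E1 : ∫ ω, ξ ω * (x ω * y ω) ∂P = 0 := by
    rw [i1.integral_fun_mul_eq_mul_integral hξm.aestronglyMeasurable
      (mx.mul my).aestronglyMeasurable, hE, zero_mul]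
  have E2 : ∫ ω, ξ ω ^ 2 * y ω ^ 2 ∂P = v * ∫ ω, y ω ^ 2 ∂P := by
    rw [i2.integral_fun_mul_eq_mul_integral (hξm.pow_const 2).aestronglyMeasurable
      (my.pow_const 2).aestronglyMeasurable, hE2]
  have hexp : ∀ ω, (x ω + y ω * ξ ω) ^ 2
      = x ω ^ 2 + (2 * (ξ ω * (x ω * y ω)) + ξ ω ^ 2 * y ω ^ 2) := fun ω => by ring
  have J : Integrable (fun ω => 2 * (ξ ω * (x ω * y ω)) + ξ ω ^ 2 * y ω ^ 2) P :=
    (I1.const_mul 2).add I2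
  constructor
  · rw [memLp_two_iff_integrable_sq (by fun_prop)]
    simp only [hexp]
    exact hx2.integrable_sq.add J
  · simp only [hexp]
    rw [integral_add hx2.integrable_sq J, integral_add (I1.const_mul 2) I2, integral_const_mul,
      E1, E2]
    ring

section scheme

set_option linter.unusedSectionVars false

variable {V : Type} [Fintype V] [Nonempty V] {Ω : Type} [mΩ : MeasurableSpace Ω]
  {T L : ℝ} {g : ℝ → ℝ} {N : ℕ}

noncomputable def dW (S : BScheme V Ω T L g N) (n : ℕ) (ω : Ω) : ℝ :=
  S.W (((n : ℝ) + 1) * (T / N)) ω - S.W ((n : ℝ) * (T / N)) ω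

theorem dt_pos (S : BScheme V Ω T L g N) : 0 < T / N := by
  have := S.T_pos
  have : (0:ℝ) < N := by exact_mod_cast S.N_pos
  positivity

theorem tn_le (S : BScheme V Ω T L g N) (n : ℕ) (hn : n < N) : ((n : ℝ) + 1) * (T / N) ≤ T := by
  have h0 := dt_pos S
  have : (0:ℝ) < N := by exact_mod_cast S.N_pos
  have h1 : (n:ℝ) + 1 ≤ N := by exact_mod_cast hn
  calc ((n : ℝ) + 1) * (T / N) ≤ N * (T / N) := by gcongr
    _ = T := by field_simp

theorem dW_measF (S : BScheme V Ω T L g N) (n : ℕ) (hn : n < N) :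
    Measurable[S.F (((n : ℝ) + 1) * (T / N))] (dW S n) := by
  have h0 := dt_pos S
  have h1 := tn_le S n hn
  have h2 : (n : ℝ) * (T / N) ≤ ((n : ℝ) + 1) * (T / N) := by gcongr; linarith
  have a := S.W_meas (((n : ℝ) + 1) * (T / N)) (by positivity) h1
  have b := (S.W_meas ((n : ℝ) * (T / N)) (by positivity) (h2.trans h1)).mono
    (S.F_mono h2) le_rfl
  exact a.sub b

theorem core_scheme (S : BScheme V Ω T L g N) (n : ℕ) (hn : n < N) (x y : Ω → ℝ)
    (hx : Measurable[S.F ((n : ℝ) * (T / N))] x) (hy : Measurable[S.F ((n : ℝ) * (T / N))] y)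
    (hx2 : MemLp x 2 S.P) (hy2 : MemLp y 2 S.P) :
    MemLp (fun ω => x ω + y ω * dW S n ω) 2 S.P ∧
    ∫ ω, (x ω + y ω * dW S n ω) ^ 2 ∂S.P
      = ∫ ω, x ω ^ 2 ∂S.P + (T / N) * ∫ ω, y ω ^ 2 ∂S.P := by
  have h0 := dt_pos S
  have h1 := tn_le S n hn
  have h2 : (n : ℝ) * (T / N) ≤ ((n : ℝ) + 1) * (T / N) := by gcongr; linarith
  have := S.probP
  have hd : Measurable (dW S n) := (dW_measF S n hn).mono (S.F_le _) le_rfl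
  refine core_indep (S.F ((n : ℝ) * (T / N))) S.P (S.F_le _) (dW S n) (T / N) h0.le
    hd
    (S.W_indep _ _ (by positivity) h2 h1) ?_ x y hx hy hx2 hy2
  have := S.W_law _ _ (by positivity) h2 h1
  rw [show ((n : ℝ) + 1) * (T / N) - (n : ℝ) * (T / N) = T / N by ring] at this
  exact this

theorem g_cont (S : BScheme V Ω T L g N) : Continuous g := by
  have : LipschitzWith ⟨L, S.L_nonneg⟩ g := LipschitzWith.of_dist_le_mul fun x y => by
    rw [Real.dist_eq, Real.dist_eq]; exact S.g_lip x y
  exact this.continuous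

theorem g_memLp (S : BScheme V Ω T L g N) (x : Ω → ℝ) (hx : MemLp x 2 S.P) :
    MemLp (fun ω => g (x ω)) 2 S.P := by
  have := S.probP
  have h := (hx.norm.const_mul L).add (memLp_const (μ := S.P) (p := 2) |g 0|)
  refine h.mono ((g_cont S).comp_aestronglyMeasurable hx.1) (Filter.Eventually.of_forall fun ω => ?_)
  have h1 := S.g_lip (x ω) 0
  have h2 : |g (x ω)| ≤ |g (x ω) - g 0| + |g 0| := by
    have := abs_add_le (g (x ω) - g 0) (g 0); simpa using this
  rw [sub_zero] at h1
  simp only [Pi.add_apply, Real.norm_eq_abs]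
  exact (h2.trans (by linarith)).trans (le_abs_self _)

theorem integrable_normSq (m : V → ℝ) (P : Measure Ω) (x : Ω → V → ℝ)
    (hx : ∀ K, MemLp (fun ω => x ω K) 2 P) : Integrable (fun ω => normSq m (x ω)) P := by
  unfold normSq
  exact integrable_finsetSum _ fun K _ => ((hx K).integrable_sq).const_mul _

theorem integral_normSq (m : V → ℝ) (P : Measure Ω) (x : Ω → V → ℝ)
    (hx : ∀ K, MemLp (fun ω => x ω K) 2 P) :
    ∫ ω, normSq m (x ω) ∂P = ∑ K, m K * ∫ ω, x ω K ^ 2 ∂P := by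
  unfold normSq
  rw [integral_finsetSum _ fun K _ => ((hx K).integrable_sq).const_mul _]
  simp only [integral_const_mul]

theorem integrable_semi (τ : V → V → ℝ) (P : Measure Ω) (x : Ω → V → ℝ)
    (hx : ∀ K, MemLp (fun ω => x ω K) 2 P) : Integrable (fun ω => seminormSq τ (x ω)) P := by
  unfold seminormSq
  exact (integrable_finsetSum _ fun K _ => integrable_finsetSum _ fun L _ =>
    (((hx K).sub (hx L)).integrable_sq).const_mul _).const_mul _

theorem integral_semi (τ : V → V → ℝ) (P : Measure Ω) (x : Ω → V → ℝ)
    (hx : ∀ K, MemLp (fun ω => x ω K) 2 P) :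
    ∫ ω, seminormSq τ (x ω) ∂P
      = (1 / 2) * ∑ K, ∑ L, τ K L * ∫ ω, (x ω K - x ω L) ^ 2 ∂P := by
  unfold seminormSq
  have h : ∀ K L, Integrable (fun ω => τ K L * (x ω K - x ω L) ^ 2) P := fun K L =>
    (((hx K).sub (hx L)).integrable_sq).const_mul _
  rw [integral_const_mul, integral_finsetSum _ fun K _ => integrable_finsetSum _ fun L _ => h K L]
  simp only [integral_finsetSum _ fun L _ => h _ L, integral_const_mul]

theorem vec_step (S : BScheme V Ω T L g N) (n : ℕ) (hn : n < N) (x y : Ω → V → ℝ)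
    (hx : Measurable[S.F ((n : ℝ) * (T / N))] x) (hy : Measurable[S.F ((n : ℝ) * (T / N))] y)
    (hx2 : ∀ K, MemLp (fun ω => x ω K) 2 S.P) (hy2 : ∀ K, MemLp (fun ω => y ω K) 2 S.P) :
    (∀ K, MemLp (fun ω => x ω K + y ω K * dW S n ω) 2 S.P) ∧
    (∫ ω, normSq S.m (fun K => x ω K + y ω K * dW S n ω) ∂S.P
      = ∫ ω, normSq S.m (x ω) ∂S.P + (T / N) * ∫ ω, normSq S.m (y ω) ∂S.P) ∧
    (∫ ω, seminormSq S.τ (fun K => x ω K + y ω K * dW S n ω) ∂S.P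
      = ∫ ω, seminormSq S.τ (x ω) ∂S.P + (T / N) * ∫ ω, seminormSq S.τ (y ω) ∂S.P) := by
  have mx : ∀ K, Measurable[S.F ((n : ℝ) * (T / N))] (fun ω => x ω K) := fun K =>
    (measurable_pi_apply K).comp hx
  have my : ∀ K, Measurable[S.F ((n : ℝ) * (T / N))] (fun ω => y ω K) := fun K =>
    (measurable_pi_apply K).comp hy
  have h1 : ∀ K, MemLp (fun ω => x ω K + y ω K * dW S n ω) 2 S.P := fun K =>
    (core_scheme S n hn _ _ (mx K) (my K) (hx2 K) (hy2 K)).1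
  refine ⟨h1, ?_, ?_⟩
  · rw [integral_normSq _ _ _ h1, integral_normSq _ _ _ hx2, integral_normSq _ _ _ hy2,
      Finset.mul_sum, ← Finset.sum_add_distrib]
    refine Finset.sum_congr rfl fun K _ => ?_
    rw [(core_scheme S n hn _ _ (mx K) (my K) (hx2 K) (hy2 K)).2]
    ring
  · rw [integral_semi _ _ _ h1, integral_semi _ _ _ hx2, integral_semi _ _ _ hy2]
    have : ∀ K L, ∫ ω, ((x ω K + y ω K * dW S n ω) - (x ω L + y ω L * dW S n ω)) ^ 2 ∂S.P
        = ∫ ω, (x ω K - x ω L) ^ 2 ∂S.P + (T / N) * ∫ ω, (y ω K - y ω L) ^ 2 ∂S.P := by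
      intro K L
      refine Eq.trans ?_ (core_scheme S n hn (fun ω => x ω K - x ω L) (fun ω => y ω K - y ω L)
        ((mx K).sub (mx L)) ((my K).sub (my L))
        ((hx2 K).sub (hx2 L)) ((hy2 K).sub (hy2 L))).2
      refine integral_congr_ae (Filter.Eventually.of_forall fun ω => ?_)
      simp only
      ring
    simp only [this, mul_add, Finset.sum_add_distrib, Finset.mul_sum]
    congr 1
    refine Finset.sum_congr rfl fun K _ => Finset.sum_congr rfl fun L _ => ?_
    ring

theorem scheme' (S : BScheme V Ω T L g N) (n : ℕ) (hn : n < N) : ∀ᵐ ω ∂S.P, ∀ K,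
    S.m K * (S.u (n + 1) ω K - (S.u n ω K + g (S.u n ω K) * dW S n ω))
      + (T / N) * ∑ L', S.τ K L' * (S.u (n + 1) ω K - S.u (n + 1) ω L') = 0 := by
  filter_upwards [S.scheme n hn] with ω h K
  have h0 := dt_pos S
  have h1 := h K
  have e : S.m K = (T / N) * (S.m K / (T / N)) := (mul_div_cancel₀ _ h0.ne').symm
  rw [e]
  unfold dW
  linear_combination (T / N) * h1

theorem u_measΩ (S : BScheme V Ω T L g N) (n : ℕ) (hn : n ≤ N) : Measurable (S.u n) :=
  (S.u_meas n hn).mono (S.F_le _) le_rfl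

theorem gu_meas (S : BScheme V Ω T L g N) (n : ℕ) (hn : n ≤ N) :
    Measurable[S.F ((n : ℝ) * (T / N))] (fun ω K => g (S.u n ω K)) := by
  refine @measurable_pi_lambda Ω V (fun _ => ℝ) (S.F _) _ _ fun K => ?_
  exact (g_cont S).measurable.comp ((measurable_pi_apply K).comp (S.u_meas n hn))

theorem memLp_of_normSq (S : BScheme V Ω T L g N) (x : Ω → V → ℝ) (hx : Measurable x)
    (h : Integrable (fun ω => normSq S.m (x ω)) S.P) (K : V) :
    MemLp (fun ω => x ω K) 2 S.P := by
  have mK : Measurable (fun ω => x ω K) := (measurable_pi_apply K).comp hx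
  rw [memLp_two_iff_integrable_sq mK.aestronglyMeasurable]
  refine (h.const_mul (S.m K)⁻¹).mono' (mK.pow_const 2).aestronglyMeasurable
    (Filter.Eventually.of_forall fun ω => ?_)
  have hm := S.m_pos K
  have : S.m K * x ω K ^ 2 ≤ normSq S.m (x ω) :=
    Finset.single_le_sum (f := fun K => S.m K * x ω K ^ 2)
      (fun K _ => mul_nonneg (S.m_pos K).le (sq_nonneg _)) (Finset.mem_univ K)
  rw [Real.norm_of_nonneg (sq_nonneg _), inv_mul_eq_div, le_div_iff₀ hm]
  linarith

theorem u_memLp (S : BScheme V Ω T L g N) (n : ℕ) (hn : n ≤ N) (K : V) :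
    MemLp (fun ω => S.u n ω K) 2 S.P := by
  induction n generalizing K with
  | zero => exact memLp_of_normSq S _ (u_measΩ S 0 hn) S.u0_int K
  | succ n ih =>
    have ih' := ih (by omega)
    have h1 := (vec_step S n hn (S.u n) (fun ω K => g (S.u n ω K)) (S.u_meas n (by omega))
      (gu_meas S n (by omega)) ih' (fun K => g_memLp S _ (ih' K))).1
    refine memLp_of_normSq S _ (u_measΩ S (n+1) hn) ?_ K
    refine (integrable_normSq S.m S.P _ h1).mono' ?_ ?_
    · have := u_measΩ S (n+1) hn
      unfold normSq
      fun_prop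
    · filter_upwards [scheme' S n hn] with ω h
      rw [Real.norm_of_nonneg (normSq_nonneg' _ S.m_pos _)]
      exact contr_L2 S.m S.m_pos S.τ S.τ_symm S.τ_nonneg _ (dt_pos S) _ _ h

theorem gu_memLp (S : BScheme V Ω T L g N) (n : ℕ) (hn : n ≤ N) (K : V) :
    MemLp (fun ω => g (S.u n ω K)) 2 S.P := g_memLp S _ (u_memLp S n hn K)

theorem step_bounds (S : BScheme V Ω T L g N) (n : ℕ) (hn : n < N) :
    (∫ ω, normSq S.m (S.u (n+1) ω) ∂S.P ≤ ∫ ω, normSq S.m (S.u n ω) ∂S.P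
      + (T / N) * ∫ ω, normSq S.m (fun K => g (S.u n ω K)) ∂S.P) ∧
    (∫ ω, seminormSq S.τ (S.u (n+1) ω) ∂S.P ≤ ∫ ω, seminormSq S.τ (S.u n ω) ∂S.P
      + (T / N) * ∫ ω, seminormSq S.τ (fun K => g (S.u n ω K)) ∂S.P) := by
  obtain ⟨h1, h2, h3⟩ := vec_step S n hn (S.u n) (fun ω K => g (S.u n ω K)) (S.u_meas n hn.le)
      (gu_meas S n hn.le) (u_memLp S n hn.le) (gu_memLp S n hn.le)
  rw [← h2, ← h3]
  constructor
  · refine integral_mono_ae (integrable_normSq _ _ _ (u_memLp S (n+1) hn))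
      (integrable_normSq _ _ _ h1) ?_
    filter_upwards [scheme' S n hn] with ω h
    exact contr_L2 S.m S.m_pos S.τ S.τ_symm S.τ_nonneg _ (dt_pos S) _ _ h
  · refine integral_mono_ae (integrable_semi _ _ _ (u_memLp S (n+1) hn))
      (integrable_semi _ _ _ h1) ?_
    filter_upwards [scheme' S n hn] with ω h
    exact contr_H1 S.m S.m_pos S.τ S.τ_symm S.τ_nonneg _ (dt_pos S) _ _ h

theorem g_normSq (S : BScheme V Ω T L g N) (g₀ A : ℝ) (hg : |g 0| ≤ g₀) (hA : ∑ K, S.m K ≤ A)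
    (w : V → ℝ) : normSq S.m (fun K => g (w K)) ≤ 2 * g₀ ^ 2 * A + 2 * L ^ 2 * normSq S.m w := by
  have h1 : normSq S.m (fun K => g (w K)) ≤
      2 * g₀ ^ 2 * ∑ K, S.m K + 2 * L ^ 2 * normSq S.m w := by
    unfold normSq
    rw [Finset.mul_sum, Finset.mul_sum, ← Finset.sum_add_distrib]
    refine Finset.sum_le_sum fun K _ => ?_
    have h1 := S.g_lip (w K) 0
    rw [sub_zero] at h1
    have h2 : (g (w K) - g 0) ^ 2 ≤ (L * |w K|) ^ 2 := sq_le_sq' (by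
      have := neg_abs_le (g (w K) - g 0); linarith) ((le_abs_self _).trans h1)
    rw [mul_pow, sq_abs] at h2
    have h3 : g 0 ^ 2 ≤ g₀ ^ 2 := sq_le_sq' (by have := neg_abs_le (g 0); linarith)
      ((le_abs_self _).trans hg)
    have h4 : g (w K) ^ 2 ≤ 2 * g₀ ^ 2 + 2 * (L ^ 2 * w K ^ 2) := by
      nlinarith [sq_nonneg (g (w K) - g 0 - g 0)]
    have := mul_le_mul_of_nonneg_left h4 (S.m_pos K).le
    linarith
  have := mul_le_mul_of_nonneg_left hA (by positivity : 0 ≤ 2 * g₀ ^ 2)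
  linarith

theorem g_semi (S : BScheme V Ω T L g N) (w : V → ℝ) :
    seminormSq S.τ (fun K => g (w K)) ≤ L ^ 2 * seminormSq S.τ w := by
  unfold seminormSq
  have : ∑ K, ∑ L', S.τ K L' * (g (w K) - g (w L')) ^ 2 ≤
      L ^ 2 * ∑ K, ∑ L', S.τ K L' * (w K - w L') ^ 2 := by
    simp only [Finset.mul_sum]
    refine Finset.sum_le_sum fun K _ => Finset.sum_le_sum fun L' _ => ?_
    have h1 := S.g_lip (w K) (w L')
    have h2 : (g (w K) - g (w L')) ^ 2 ≤ (L * |w K - w L'|) ^ 2 := sq_le_sq' (by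
      have := neg_abs_le (g (w K) - g (w L')); linarith) ((le_abs_self _).trans h1)
    rw [mul_pow, sq_abs] at h2
    have := mul_le_mul_of_nonneg_left h2 (S.τ_nonneg K L')
    linarith
  linarith

theorem E_gnorm (S : BScheme V Ω T L g N) (g₀ A : ℝ) (hg : |g 0| ≤ g₀) (hA : ∑ K, S.m K ≤ A)
    (n : ℕ) (hn : n ≤ N) : ∫ ω, normSq S.m (fun K => g (S.u n ω K)) ∂S.P ≤
      2 * g₀ ^ 2 * A + 2 * L ^ 2 * ∫ ω, normSq S.m (S.u n ω) ∂S.P := by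
  have := S.probP
  have i := integrable_normSq S.m S.P _ (u_memLp S n hn)
  calc _ ≤ ∫ ω, (2 * g₀ ^ 2 * A + 2 * L ^ 2 * normSq S.m (S.u n ω)) ∂S.P :=
        integral_mono (integrable_normSq S.m S.P _ (gu_memLp S n hn))
          ((integrable_const _).add (i.const_mul _)) fun ω => g_normSq S g₀ A hg hA _
    _ = _ := by
        rw [integral_add (integrable_const _) (i.const_mul _), integral_const, integral_const_mul]; simp

theorem L2_bound (S : BScheme V Ω T L g N) (g₀ A : ℝ) (hg : |g 0| ≤ g₀) (hA : ∑ K, S.m K ≤ A)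
    (hA0 : 0 < A) (n : ℕ) (hn : n ≤ N) : ∫ ω, normSq S.m (S.u n ω) ∂S.P ≤
      Real.exp (2 * L ^ 2 * T) * (∫ ω, normSq S.m (S.u 0 ω) ∂S.P + T * (2 * g₀ ^ 2 * A)) := by
  refine gronwall_disc (fun n => ∫ ω, normSq S.m (S.u n ω) ∂S.P) N T (2 * L ^ 2) (2 * g₀ ^ 2 * A)
    S.N_pos S.T_pos (by positivity) (by positivity)
    (integral_nonneg fun ω => normSq_nonneg' _ S.m_pos _) ?_ n hn
  intro n hn
  have h1 := (step_bounds S n hn).1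
  have h2 := mul_le_mul_of_nonneg_left (E_gnorm S g₀ A hg hA n hn.le) (dt_pos S).le
  linarith

theorem H1_bound (S : BScheme V Ω T L g N) (n : ℕ) (hn : n ≤ N) :
    ∫ ω, seminormSq S.τ (S.u n ω) ∂S.P ≤
      Real.exp (L ^ 2 * T) * (∫ ω, seminormSq S.τ (S.u 0 ω) ∂S.P) := by
  have := gronwall_disc (fun n => ∫ ω, seminormSq S.τ (S.u n ω) ∂S.P) N T (L ^ 2) 0
    S.N_pos S.T_pos (by positivity) le_rfl
    (integral_nonneg fun ω => seminormSq_nonneg' _ S.τ_nonneg _) ?_ n hn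
  · simpa using this
  intro n hn
  have h1 := (step_bounds S n hn).2
  have h2 : ∫ ω, seminormSq S.τ (fun K => g (S.u n ω K)) ∂S.P ≤
      L ^ 2 * ∫ ω, seminormSq S.τ (S.u n ω) ∂S.P := by
    rw [← integral_const_mul]
    exact integral_mono (integrable_semi S.τ S.P _ (gu_memLp S n hn.le))
      ((integrable_semi S.τ S.P _ (u_memLp S n hn.le)).const_mul _) fun ω => g_semi S _
  have h3 := mul_le_mul_of_nonneg_left h2 (dt_pos S).le
  linarith

noncomputable def MM (S : BScheme V Ω T L g N) (i k : ℕ) (ω : Ω) (K : V) : ℝ :=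
  ∑ l ∈ Finset.range k, g (S.u (i + l) ω K) * dW S (i + l) ω

theorem MM_facts (S : BScheme V Ω T L g N) (G : ℝ)
    (hG : ∀ n, n ≤ N → ∫ ω, normSq S.m (fun K => g (S.u n ω K)) ∂S.P ≤ G) (i k : ℕ)
    (hk : i + k ≤ N) :
    Measurable[S.F (((i + k : ℕ) : ℝ) * (T / N))] (MM S i k) ∧
    (∀ K, MemLp (fun ω => MM S i k ω K) 2 S.P) ∧
    ∫ ω, normSq S.m (MM S i k ω) ∂S.P ≤ k * (T / N) * G := by
  induction k with
  | zero =>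
    have e : MM S i 0 = fun _ _ => 0 := by ext; simp [MM]
    rw [e]
    refine ⟨measurable_const, fun K => MemLp.zero, ?_⟩
    simp [normSq]
  | succ k ih =>
    obtain ⟨h1, h2, h3⟩ := ih (by omega)
    have e : MM S i (k+1) = fun ω K => MM S i k ω K + g (S.u (i+k) ω K) * dW S (i+k) ω := by
      ext ω K; simp [MM, Finset.sum_range_succ]
    have hik : i + k < N := by omega
    obtain ⟨a1, a2, -⟩ := vec_step S (i+k) hik (MM S i k) (fun ω K => g (S.u (i+k) ω K)) h1
      (gu_meas S _ hik.le) h2 (gu_memLp S _ hik.le)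
    have hmono : S.F (((i + k : ℕ) : ℝ) * (T / N)) ≤ S.F ((((i + k : ℕ) : ℝ) + 1) * (T / N)) :=
      S.F_mono (by have := dt_pos S; gcongr; linarith)
    rw [e]
    refine ⟨?_, a1, ?_⟩
    · rw [show ((i + (k + 1) : ℕ) : ℝ) = ((i + k : ℕ) : ℝ) + 1 by push_cast; ring]
      refine @measurable_pi_lambda Ω V (fun _ => ℝ) (S.F _) _ _ fun K => ?_
      have b1 : Measurable[S.F ((((i + k : ℕ) : ℝ) + 1) * (T / N))] (fun ω => MM S i k ω K) :=
        ((measurable_pi_apply K).comp h1).mono hmono le_rfl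
      have b2 : Measurable[S.F ((((i + k : ℕ) : ℝ) + 1) * (T / N))]
          (fun ω => g (S.u (i+k) ω K)) :=
        ((measurable_pi_apply K).comp (gu_meas S _ hik.le)).mono hmono le_rfl
      exact b1.add (b2.mul (dW_measF S _ hik))
    · rw [a2]
      have := mul_le_mul_of_nonneg_left (hG (i+k) hik.le) (dt_pos S).le
      push_cast
      linarith

theorem incr_bound (S : BScheme V Ω T L g N) (G D' : ℝ)
    (hG : ∀ n, n ≤ N → ∫ ω, normSq S.m (fun K => g (S.u n ω K)) ∂S.P ≤ G)
    (hD : ∀ n, n ≤ N → ∫ ω, seminormSq S.τ (S.u n ω) ∂S.P ≤ D') (i k : ℕ)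
    (hk : i + k ≤ N) :
    ∫ ω, normSq S.m (fun K => S.u (i + k) ω K - S.u i ω K) ∂S.P
      ≤ k * (T / N) * (5 * D' + G) := by
  have hall : ∀ᵐ ω ∂S.P, ∀ n, n < N → ∀ K,
    S.m K * (S.u (n + 1) ω K - (S.u n ω K + g (S.u n ω K) * dW S n ω))
      + (T / N) * ∑ L', S.τ K L' * (S.u (n + 1) ω K - S.u (n + 1) ω L') = 0 := by
    rw [ae_all_iff]; intro n
    by_cases hn : n < N
    · filter_upwards [scheme' S n hn] with ω h _ using h
    · exact Filter.Eventually.of_forall fun ω h => absurd h hn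
  have tel : ∀ᵐ ω ∂S.P, ∀ K, S.m K * (S.u (i + k) ω K - S.u i ω K)
      + (T / N) * ∑ l ∈ Finset.range k, ∑ L', S.τ K L' *
        (S.u (i + l + 1) ω K - S.u (i + l + 1) ω L') = S.m K * MM S i k ω K := by
    filter_upwards [hall] with ω h K
    induction k with
    | zero => simp [MM]
    | succ k ih =>
      have h1 := ih (by omega)
      have h2 := h (i + k) (by omega) K
      unfold MM at h1 ⊢
      rw [Finset.sum_range_succ, Finset.sum_range_succ, ← add_assoc]
      linear_combination h1 + h2
  obtain ⟨m1, m2, m3⟩ := MM_facts S G hG i k hk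
  have ui : ∀ n, n ≤ N → Integrable (fun ω => seminormSq S.τ (S.u n ω)) S.P := fun n hn =>
    integrable_semi _ _ _ (u_memLp S n hn)
  have il : ∀ l ∈ Finset.range k, Integrable (fun ω => seminormSq S.τ (S.u (i + l + 1) ω)
      + 2 * seminormSq S.τ (S.u (i + k) ω) + 2 * seminormSq S.τ (S.u i ω)) S.P := by
    intro l hl
    have := Finset.mem_range.1 hl
    exact ((ui _ (by omega)).add ((ui _ hk).const_mul 2)).add ((ui _ (by omega)).const_mul 2)
  have isum := (integrable_finsetSum _ il).const_mul (T / N)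
  have iM := integrable_normSq S.m S.P _ m2
  calc _ ≤ ∫ ω, ((T / N) * ∑ l ∈ Finset.range k, (seminormSq S.τ (S.u (i + l + 1) ω)
      + 2 * seminormSq S.τ (S.u (i + k) ω) + 2 * seminormSq S.τ (S.u i ω))
      + normSq S.m (MM S i k ω)) ∂S.P := by
        refine integral_mono_ae (integrable_normSq S.m S.P _ fun K =>
          (u_memLp S (i+k) hk K).sub (u_memLp S i (by omega) K)) (isum.add iM) ?_
        filter_upwards [tel] with ω h
        exact incr_path S.m S.m_pos S.τ S.τ_symm S.τ_nonneg _ (dt_pos S) k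
          (fun l => S.u (i + l + 1) ω) _ _ _ h
    _ = (T / N) * ∑ l ∈ Finset.range k, ∫ ω, (seminormSq S.τ (S.u (i + l + 1) ω)
      + 2 * seminormSq S.τ (S.u (i + k) ω) + 2 * seminormSq S.τ (S.u i ω)) ∂S.P
      + ∫ ω, normSq S.m (MM S i k ω) ∂S.P := by
        rw [integral_add isum iM, integral_const_mul, integral_finsetSum _ il]
    _ ≤ (T / N) * ∑ l ∈ Finset.range k, (5 * D') + k * (T / N) * G := by
        refine add_le_add (mul_le_mul_of_nonneg_left (Finset.sum_le_sum fun l hl => ?_)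
          (dt_pos S).le) m3
        have hl' := Finset.mem_range.1 hl
        have j1 := ui (i + l + 1) (by omega)
        have j2 := (ui (i + k) hk).const_mul 2
        have j3 := (ui i (by omega)).const_mul 2
        have j12 : Integrable (fun ω => seminormSq S.τ (S.u (i + l + 1) ω)
          + 2 * seminormSq S.τ (S.u (i + k) ω)) S.P := j1.add j2
        rw [integral_add j12 j3, integral_add j1 j2, integral_const_mul, integral_const_mul]
        have a := hD (i + l + 1) (by omega)
        have b := hD (i + k) hk
        have c := hD i (by omega)
        linarith
    _ = _ := by simp; ring

end scheme

open scoped ENNReal in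
theorem kern_inner (α c t : ℝ) (hα : 0 < α) (hct : c < t) :
    ∫⁻ s in Set.Iio c, ENNReal.ofReal (1 / |t - s| ^ (1 + 2 * α))
      ≤ ENNReal.ofReal ((t - c) ^ (-(2 * α)) / (2 * α)) := by
  have h1 : ∫⁻ s in Set.Iio c, ENNReal.ofReal (1 / |t - s| ^ (1 + 2 * α))
      = ∫⁻ x in Set.Ioi (t - c), ENNReal.ofReal (x ^ (-(1 + 2 * α))) := by
    rw [← lintegral_indicator measurableSet_Iio, ← lintegral_indicator measurableSet_Ioi,
      ← lintegral_sub_left_eq_self ((Set.Ioi (t - c)).indicator _) t]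
    refine lintegral_congr fun s => ?_
    by_cases h : s < c
    · rw [Set.indicator_of_mem (by exact h), Set.indicator_of_mem (by simp; linarith),
        abs_of_pos (by linarith), Real.rpow_neg (by linarith), one_div]
    · rw [Set.indicator_of_notMem (by exact h), Set.indicator_of_notMem (by simp; linarith)]
  have hpos : 0 < t - c := by linarith
  rw [h1, ← ofReal_integral_eq_lintegral_ofReal
    (integrableOn_Ioi_rpow_of_lt (by linarith) hpos)]
  · rw [integral_Ioi_rpow_of_lt (by linarith) hpos]
    apply le_of_eq
    congr 1
    rw [show -(1 + 2 * α) + 1 = -(2 * α) by ring, neg_div_neg_eq]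
  · filter_upwards [self_mem_ae_restrict measurableSet_Ioi] with x hx
    have : 0 < x := hpos.trans hx
    simp only [Pi.zero_apply]; positivity

theorem kern_outer (α c T : ℝ) (hα : 0 < α) (hα1 : α < 1 / 2) (hc : 0 ≤ c) (hT : 0 < T) :
    ∫⁻ t in Set.Ioo c T, ENNReal.ofReal ((t - c) ^ (-(2 * α)) / (2 * α))
      ≤ ENNReal.ofReal (T ^ (1 - 2 * α) / ((1 - 2 * α) * (2 * α))) := by
  have h1 : ∫⁻ t in Set.Ioo c T, ENNReal.ofReal ((t - c) ^ (-(2 * α)) / (2 * α))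
      ≤ ∫⁻ x in Set.Ioc 0 T, ENNReal.ofReal (x ^ (-(2 * α)) / (2 * α)) := by
    rw [← lintegral_indicator measurableSet_Ioo, ← lintegral_indicator measurableSet_Ioc,
      ← lintegral_sub_right_eq_self ((Set.Ioc 0 T).indicator _) c]
    refine lintegral_mono fun t => ?_
    by_cases h : t ∈ Set.Ioo c T
    · rw [Set.indicator_of_mem h, Set.indicator_of_mem (by
        have := h.1; have := h.2; constructor <;> linarith)]
    · rw [Set.indicator_of_notMem h]; exact zero_le
  refine h1.trans ?_
  have hi := (intervalIntegral.intervalIntegrable_rpow' (a := 0) (b := T) (r := -(2*α))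
    (by linarith)).div_const (2 * α)
  rw [← ofReal_integral_eq_lintegral_ofReal]
  · rw [← intervalIntegral.integral_of_le hT.le, intervalIntegral.integral_div,
      integral_rpow (Or.inl (by linarith))]
    apply le_of_eq
    congr 1
    rw [show -(2 * α) + 1 = 1 - 2 * α by ring, Real.zero_rpow (by linarith), sub_zero, div_div]
  · exact (intervalIntegrable_iff_integrableOn_Ioc_of_le hT.le).1 hi
  · filter_upwards [self_mem_ae_restrict measurableSet_Ioc] with x hx
    have : 0 < x := hx.1
    simp only [Pi.zero_apply]; positivity

open Classical in
/-- kernel restricted to pairs separated by `c` -/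
noncomputable def HH (α c : ℝ) (t s : ℝ) : ENNReal :=
  if s < c ∧ c ≤ t then ENNReal.ofReal (1 / |t - s| ^ (1 + 2 * α)) else 0

theorem HH_meas (α c : ℝ) : Measurable (fun p : ℝ × ℝ => HH α c p.1 p.2) := by
  unfold HH
  refine Measurable.ite ?_ (by fun_prop) measurable_const
  exact (measurableSet_lt measurable_snd measurable_const).inter
    (measurableSet_le measurable_const measurable_fst)

theorem HH_bound (α c T : ℝ) (hα : 0 < α) (hα1 : α < 1 / 2) (hc : 0 ≤ c) (hT : 0 < T) :
    ∫⁻ t in Set.Ioc 0 T, ∫⁻ s in Set.Ioc 0 T, HH α c t s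
      ≤ ENNReal.ofReal (T ^ (1 - 2 * α) / ((1 - 2 * α) * (2 * α))) := by
  refine le_trans ?_ (kern_outer α c T hα hα1 hc hT)
  rw [← lintegral_indicator measurableSet_Ioc, ← lintegral_indicator measurableSet_Ioo]
  refine lintegral_mono_ae ?_
  have hne : ∀ a : ℝ, ∀ᵐ t : ℝ, t ≠ a := fun a => by
    simp [ae_iff]
  filter_upwards [hne c, hne T] with t htc htT
  by_cases h : t ∈ Set.Ioo c T
  · rw [Set.indicator_of_mem h, Set.indicator_of_mem (show t ∈ Set.Ioc 0 T from ⟨hc.trans_lt h.1, h.2.le⟩)]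
    refine le_trans ?_ (kern_inner α c t hα h.1)
    refine (setLIntegral_le_lintegral _ _).trans ?_
    rw [← lintegral_indicator measurableSet_Iio]
    refine lintegral_mono fun s => ?_
    unfold HH
    by_cases hs : s < c
    · simp [hs, h.1.le]
    · simp [hs]
  · rw [Set.indicator_of_notMem h]
    by_cases h' : t ∈ Set.Ioc 0 T
    · rw [Set.indicator_of_mem h']
      have : t < c := by
        by_contra hcon
        exact h ⟨lt_of_le_of_ne (not_lt.1 hcon) htc.symm, lt_of_le_of_ne h'.2 htT⟩
      simp [HH, not_le.2 this]
    · rw [Set.indicator_of_notMem h']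

theorem timeIdx_card (T : ℝ) (N : ℕ) (hT : 0 < T) (hN : 1 ≤ N) (s t : ℝ) (hs : 0 ≤ s)
    (ht : 0 ≤ t) (k : ℕ) (hk : k ∈ Finset.Ioc (timeIdx T N s) (timeIdx T N t)) :
    k < N ∧ s < k * (T / N) ∧ k * (T / N) ≤ t := by
  have hNr : (0:ℝ) < N := by exact_mod_cast hN
  have hδ : 0 < T / N := by positivity
  rw [Finset.mem_Ioc] at hk
  unfold timeIdx at hk
  have h1 : k < N := by omega
  have h2 : Nat.floor (s / (T / N)) < k := by omega
  have h3 : k ≤ Nat.floor (t / (T / N)) := by omega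
  refine ⟨h1, ?_, ?_⟩
  · rw [Nat.floor_lt (by positivity), div_lt_iff₀ hδ] at h2; exact h2
  · rw [Nat.le_floor_iff (by positivity), le_div_iff₀ hδ] at h3; exact h3

/-- bounding the number of grid steps times the kernel -/
theorem card_kernel (α T : ℝ) (N : ℕ) (hT : 0 < T) (hN : 1 ≤ N) (s t : ℝ) (hs : 0 ≤ s)
    (ht : 0 ≤ t) :
    ((timeIdx T N t - timeIdx T N s : ℕ) : ENNReal) * ENNReal.ofReal (1 / |t - s| ^ (1 + 2 * α))
      ≤ ∑ k ∈ Finset.range N, HH α (k * (T / N)) t s := by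
  rw [← Nat.card_Ioc, ← nsmul_eq_mul, ← Finset.sum_const]
  calc _ = ∑ k ∈ Finset.Ioc (timeIdx T N s) (timeIdx T N t), HH α (k * (T / N)) t s := by
        refine Finset.sum_congr rfl fun k hk => ?_
        obtain ⟨-, h2, h3⟩ := timeIdx_card T N hT hN s t hs ht k hk
        simp [HH, h2, h3]
    _ ≤ _ := Finset.sum_le_sum_of_subset fun k hk => Finset.mem_range.2
        (timeIdx_card T N hT hN s t hs ht k hk).1

theorem timeIdx_le (T : ℝ) (N : ℕ) (t : ℝ) : timeIdx T N t ≤ N :=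
  (min_le_right _ _).trans (Nat.sub_le _ _)

theorem timeIdx_meas (T : ℝ) (N : ℕ) : Measurable (timeIdx T N) := by
  unfold timeIdx
  exact (Nat.measurable_floor.comp (measurable_id.div_const _)).min measurable_const

theorem Q_meas {V : Type} [Fintype V] [Nonempty V] {Ω : Type} [mΩ : MeasurableSpace Ω]
    {T L : ℝ} {g : ℝ → ℝ} {N : ℕ} (S : BScheme V Ω T L g N) :
    Measurable (fun p : Ω × (ℝ × ℝ) => ENNReal.ofReal
      (normSq S.m (fun K => ul T N S.u p.2.2 p.1 K - ul T N S.u p.2.1 p.1 K))) := by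
  have h1 : Measurable (fun p : Ω × (ℕ × ℕ) => ENNReal.ofReal
      (normSq S.m (fun K => S.u (min p.2.2 N) p.1 K - S.u (min p.2.1 N) p.1 K))) := by
    refine measurable_from_prod_countable_left fun y => ?_
    have a := u_measΩ S (min y.2 N) (min_le_right _ _)
    have b := u_measΩ S (min y.1 N) (min_le_right _ _)
    have a' : ∀ K, Measurable (fun ω => S.u (min y.2 N) ω K) := fun K =>
      (measurable_pi_apply K).comp a
    have b' : ∀ K, Measurable (fun ω => S.u (min y.1 N) ω K) := fun K =>
      (measurable_pi_apply K).comp b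
    unfold normSq
    exact (Finset.measurable_fun_sum _ fun K _ =>
      (((a' K).sub (b' K)).pow_const 2).const_mul (S.m K)).ennreal_ofReal
  have h2 : Measurable (fun p : Ω × (ℝ × ℝ) => (p.1, (timeIdx T N p.2.1, timeIdx T N p.2.2))) :=
    measurable_fst.prodMk (((timeIdx_meas T N).comp (measurable_fst.comp measurable_snd)).prodMk
      ((timeIdx_meas T N).comp (measurable_snd.comp measurable_snd)))
  have h3 := h1.comp h2
  convert h3 using 1
  ext p
  simp [ul, Function.comp, min_eq_left (timeIdx_le T N _)]

theorem Q_bound {V : Type} [Fintype V] [Nonempty V] {Ω : Type} [mΩ : MeasurableSpace Ω]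
    {T L : ℝ} {g : ℝ → ℝ} {N : ℕ} (S : BScheme V Ω T L g N) (C₀ : ℝ) (hC : 0 ≤ C₀)
    (h : ∀ i k, i + k ≤ N → ∫ ω, normSq S.m (fun K => S.u (i + k) ω K - S.u i ω K) ∂S.P
      ≤ k * (T / N) * C₀) (i j : ℕ) (hi : i ≤ N) (hj : j ≤ N) :
    ∫⁻ ω, ENNReal.ofReal (normSq S.m (fun K => S.u i ω K - S.u j ω K)) ∂S.P
      ≤ ENNReal.ofReal ((T / N) * C₀) * (((j - i : ℕ) : ENNReal) + ((i - j : ℕ) : ENNReal)) := by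
  have h0 := dt_pos S
  have hint : Integrable (fun ω => normSq S.m (fun K => S.u i ω K - S.u j ω K)) S.P :=
    integrable_normSq S.m S.P _ fun K => (u_memLp S i hi K).sub (u_memLp S j hj K)
  rw [← ofReal_integral_eq_lintegral_ofReal hint
    (Filter.Eventually.of_forall fun ω => normSq_nonneg' _ S.m_pos _)]
  have key : ∫ ω, normSq S.m (fun K => S.u i ω K - S.u j ω K) ∂S.P
      ≤ (T / N) * C₀ * (((j - i : ℕ) : ℝ) + ((i - j : ℕ) : ℝ)) := by
    rcases le_total i j with hij | hij
    · obtain ⟨k, rfl⟩ := Nat.exists_eq_add_of_le hij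
      have := h i k hj
      have e : ∀ ω, normSq S.m (fun K => S.u i ω K - S.u (i + k) ω K)
          = normSq S.m (fun K => S.u (i + k) ω K - S.u i ω K) := fun ω => by
        unfold normSq
        refine Finset.sum_congr rfl fun K _ => ?_
        ring
      simp only [e]
      have e1 : i + k - i = k := by omega
      have e2 : i - (i + k) = 0 := by omega
      rw [e1, e2]
      push_cast
      linarith
    · obtain ⟨k, rfl⟩ := Nat.exists_eq_add_of_le hij
      have := h j k hi
      have e1 : j + k - j = k := by omega
      have e2 : j - (j + k) = 0 := by omega
      rw [e1, e2]
      push_cast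
      linarith
  refine (ENNReal.ofReal_le_ofReal key).trans (le_of_eq ?_)
  rw [ENNReal.ofReal_mul (by positivity), ENNReal.ofReal_add (by positivity) (by positivity),
    ENNReal.ofReal_natCast, ENNReal.ofReal_natCast]

theorem main_bound {V : Type} [Fintype V] [Nonempty V] {Ω : Type} [mΩ : MeasurableSpace Ω]
    {T L : ℝ} {g : ℝ → ℝ} {N : ℕ} (S : BScheme V Ω T L g N) (α C₀ : ℝ) (hC : 0 ≤ C₀)
    (hα₀ : 0 < α) (hα₁ : α < 1 / 2)
    (h : ∀ i k, i + k ≤ N → ∫ ω, normSq S.m (fun K => S.u (i + k) ω K - S.u i ω K) ∂S.P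
      ≤ k * (T / N) * C₀) :
    (∫ ω, (∫ t in (0:ℝ)..T, ∫ s in (0:ℝ)..T,
            normSq S.m (fun K => ul T N S.u s ω K - ul T N S.u t ω K)
              / |t - s| ^ (1 + 2 * α)) ∂S.P)
      ≤ T * C₀ * (2 * (T ^ (1 - 2 * α) / ((1 - 2 * α) * (2 * α)))) := by
  have hT := S.T_pos
  have hP := S.probP
  have h0 := dt_pos S
  have hNr : (0:ℝ) < N := by exact_mod_cast S.N_pos
  have hα2 : 0 < 1 - 2 * α := by linarith
  set c := T ^ (1 - 2 * α) / ((1 - 2 * α) * (2 * α)) with hc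
  have hc0 : 0 ≤ c := by positivity
  set μ : Measure ℝ := volume.restrict (Set.Ioc 0 T) with hμ
  let κ : ℝ × ℝ → ENNReal := fun z => ENNReal.ofReal (1 / |z.1 - z.2| ^ (1 + 2 * α))
  let q : Ω → ℝ × ℝ → ENNReal := fun ω z => ENNReal.ofReal
      (normSq S.m (fun K => ul T N S.u z.2 ω K - ul T N S.u z.1 ω K))
  have hκ : Measurable κ := by
    show Measurable fun z : ℝ × ℝ => ENNReal.ofReal (1 / |z.1 - z.2| ^ (1 + 2 * α))
    fun_prop
  have hq : Measurable (Function.uncurry q) := Q_meas S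
  have hqκ : Measurable (Function.uncurry fun ω z => q ω z * κ z) :=
    hq.mul (hκ.comp measurable_snd)
  rw [← ENNReal.ofReal_le_ofReal_iff (by positivity)]
  calc _ ≤ ‖∫ ω, (∫ t in (0:ℝ)..T, ∫ s in (0:ℝ)..T,
            normSq S.m (fun K => ul T N S.u s ω K - ul T N S.u t ω K)
              / |t - s| ^ (1 + 2 * α)) ∂S.P‖ₑ := by
        rw [Real.enorm_eq_ofReal_abs]
        exact ENNReal.ofReal_le_ofReal (le_abs_self _)
    _ ≤ ∫⁻ ω, ∫⁻ t, ∫⁻ s, q ω (t, s) * κ (t, s) ∂μ ∂μ ∂S.P := by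
        refine (enorm_integral_le_lintegral_enorm _).trans (lintegral_mono fun ω => ?_)
        rw [intervalIntegral.integral_of_le hT.le]
        refine (enorm_integral_le_lintegral_enorm _).trans (lintegral_mono fun t => ?_)
        rw [intervalIntegral.integral_of_le hT.le]
        refine (enorm_integral_le_lintegral_enorm _).trans (lintegral_mono fun s => ?_)
        have hn := normSq_nonneg' S.m S.m_pos (fun K => ul T N S.u s ω K - ul T N S.u t ω K)
        rw [Real.enorm_eq_ofReal (by positivity), div_eq_mul_one_div, ENNReal.ofReal_mul hn]
    _ = ∫⁻ ω, ∫⁻ z, q ω z * κ z ∂(μ.prod μ) ∂S.P := by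
        refine lintegral_congr fun ω => ?_
        exact (lintegral_prod (fun z => q ω z * κ z)
          (hqκ.comp measurable_prodMk_left).aemeasurable).symm
    _ = ∫⁻ z, ∫⁻ ω, q ω z * κ z ∂S.P ∂(μ.prod μ) :=
        lintegral_lintegral_swap hqκ.aemeasurable
    _ ≤ ∫⁻ z, ENNReal.ofReal ((T / N) * C₀) * (∑ k ∈ Finset.range N,
          (HH α (k * (T / N)) z.1 z.2 + HH α (k * (T / N)) z.2 z.1)) ∂(μ.prod μ) := by
        refine lintegral_mono_ae ?_
        have hz : ∀ᵐ z ∂(μ.prod μ), z ∈ Set.Ioc 0 T ×ˢ Set.Ioc 0 T := by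
          rw [hμ, Measure.prod_restrict]
          exact self_mem_ae_restrict (measurableSet_Ioc.prod measurableSet_Ioc)
        filter_upwards [hz] with z hz
        have z1 : 0 ≤ z.1 := hz.1.1.le
        have z2 : 0 ≤ z.2 := hz.2.1.le
        rw [lintegral_mul_const' _ _ ENNReal.ofReal_ne_top]
        have hb := Q_bound S C₀ hC h (timeIdx T N z.2) (timeIdx T N z.1) (timeIdx_le T N _)
          (timeIdx_le T N _)
        refine (mul_le_mul_left hb (κ z)).trans ?_
        rw [mul_assoc]
        refine mul_le_mul_right ?_ _
        rw [add_mul, Finset.sum_add_distrib]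
        refine add_le_add (card_kernel α T N hT S.N_pos z.2 z.1 z2 z1) ?_
        have := card_kernel α T N hT S.N_pos z.1 z.2 z1 z2
        rwa [abs_sub_comm] at this
    _ = ENNReal.ofReal ((T / N) * C₀) * ∑ k ∈ Finset.range N,
          (∫⁻ t, ∫⁻ s, HH α (k * (T / N)) t s ∂μ ∂μ + ∫⁻ t, ∫⁻ s, HH α (k * (T / N)) t s ∂μ ∂μ) := by
        rw [lintegral_const_mul' _ _ ENNReal.ofReal_ne_top, lintegral_finsetSum]
        · congr 1
          refine Finset.sum_congr rfl fun k _ => ?_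
          rw [lintegral_add_left (HH_meas α _), lintegral_prod _ (HH_meas α _).aemeasurable,
            lintegral_prod_symm' (fun z : ℝ × ℝ => HH α (k * (T / N)) z.2 z.1)
              ((HH_meas α _).comp measurable_swap)]
        · intro k _
          exact (HH_meas α _).add ((HH_meas α _).comp measurable_swap)
    _ ≤ ENNReal.ofReal ((T / N) * C₀) * ∑ k ∈ Finset.range N,
          (ENNReal.ofReal c + ENNReal.ofReal c) := by
        gcongr with k _
        · exact HH_bound α _ T hα₀ hα₁ (by positivity) hT
        · exact HH_bound α _ T hα₀ hα₁ (by positivity) hT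
    _ = _ := by
        rw [Finset.sum_const, Finset.card_range, nsmul_eq_mul, ← ENNReal.ofReal_add hc0 hc0,
          ← ENNReal.ofReal_natCast, ← ENNReal.ofReal_mul (by positivity),
          ← ENNReal.ofReal_mul (by positivity)]
        congr 1
        field_simp
        ring

/-- **Lemma 3.10, fractional Sobolev-in-time bound for `u^l`.**
For every `α ∈ (0, 1/2)` and all `T > 0`, `L ≥ 0`, `g₀ ≥ 0`, `A > 0`, `B ≥ 0`,
`D ≥ 0` there is a constant `C ≥ 0`, depending only on `α, T, L, g₀, A, B, D`,
such that for every scheme (with `Σ m K ≤ A`, `|g 0| ≤ g₀`, `E[‖u⁰‖_m²] ≤ B`,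
`E[|u⁰|₁²] ≤ D`):
`E[∫₀^T ∫₀^T ‖u^l(s) − u^l(t)‖_m² / |t − s|^{1+2α} ds dt] ≤ C`. -/
theorem fractional_sobolev_bound_ul (α T L g₀ A B D : ℝ)
    (hα₀ : 0 < α) (hα₁ : α < 1 / 2)
    (hT : 0 < T) (hL : 0 ≤ L) (hg₀ : 0 ≤ g₀) (hA : 0 < A) (hB : 0 ≤ B) (hD : 0 ≤ D) :
    ∃ C : ℝ, 0 ≤ C ∧
      ∀ (V : Type) [Fintype V] [Nonempty V]
        (Ω : Type) [MeasurableSpace Ω] (g : ℝ → ℝ) (N : ℕ)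
        (S : BScheme V Ω T L g N),
        |g 0| ≤ g₀ → (∑ K, S.m K) ≤ A →
        (∫ ω, normSq S.m (S.u 0 ω) ∂S.P) ≤ B →
        (∫ ω, seminormSq S.τ (S.u 0 ω) ∂S.P) ≤ D →
        (∫ ω, (∫ t in (0:ℝ)..T, ∫ s in (0:ℝ)..T,
            normSq S.m (fun K => ul T N S.u s ω K - ul T N S.u t ω K)
              / |t - s| ^ (1 + 2 * α)) ∂S.P)
          ≤ C := by
  have hα2 : 0 < 1 - 2 * α := by linarith
  refine ⟨T * (5 * (Real.exp (L ^ 2 * T) * D) + (2 * g₀ ^ 2 * A + 2 * L ^ 2 *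
    (Real.exp (2 * L ^ 2 * T) * (B + T * (2 * g₀ ^ 2 * A)))))
    * (2 * (T ^ (1 - 2 * α) / ((1 - 2 * α) * (2 * α)))), by positivity, ?_⟩
  intro V _ _ Ω _ g N S hg hAm hBi hDi
  refine main_bound S α _ (by positivity) hα₀ hα₁ ?_
  intro i k hik
  refine incr_bound S _ _ ?_ ?_ i k hik
  · intro n hn
    refine (E_gnorm S g₀ A hg hAm n hn).trans ?_
    have h1 := L2_bound S g₀ A hg hAm hA n hn
    have h2 : Real.exp (2 * L ^ 2 * T) * (∫ ω, normSq S.m (S.u 0 ω) ∂S.P + T * (2 * g₀ ^ 2 * A))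
        ≤ Real.exp (2 * L ^ 2 * T) * (B + T * (2 * g₀ ^ 2 * A)) := by gcongr
    have h3 := mul_le_mul_of_nonneg_left (h1.trans h2) (by positivity : 0 ≤ 2 * L ^ 2)
    linarith
  · intro n hn
    refine (H1_bound S n hn).trans ?_
    gcongr
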